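/- There is an absolute constant Γ > 0 with the following property. Let p, r, N, k ∈ ℕ with 1 ≤ r, 1 ≤ N, r < p − N, and 0 ≤ k ≤ min{N, r}. Set γ := (p/r)·H(N/p) − H(k/r) − (p/r − 1)·H((N−k)/(p−r)). Then binom(r,k)·binom(p−r,N−k) ≤ Γ·binom(p,N)·√(N·(p−N)/(p−N−r))·2^(−r·γ). -/

import Mathlib

/-- The binary entropy function `H(t) = −t·log₂ t − (1−t)·log₂(1−t)`
(with the conventions of `Real.logb`, so `H 0 = H 1 = 0`). -/
noncomputable def binEntropy (t : ℝ) : ℝ :=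
  -(t * Real.logb 2 t) - (1 - t) * Real.logb 2 (1 - t)

/-- `n ^ n` as an exponential. -/
theorem aux_pow_self (n : ℕ) : ((n : ℝ)) ^ n = Real.exp (n * Real.log n) := by
  rcases Nat.eq_zero_or_pos n with h | h
  · subst h; simp
  · have : (0 : ℝ) < n := by exact_mod_cast h
    rw [Real.exp_nat_mul, Real.exp_log this]

theorem aux_mul_log_div (x n : ℝ) (hn : n ≠ 0) :
    x * Real.log (x / n) = x * Real.log x - x * Real.log n := by
  by_cases hx : x = 0
  · subst hx; simp
  · rw [Real.log_div hx hn]; ring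

theorem aux_ent (k l : ℕ) (h : 1 ≤ k + l) :
    (2 : ℝ) ^ (((k : ℝ) + l) * binEntropy ((k : ℝ) / ((k : ℝ) + l))) * ((k : ℝ) ^ k * (l : ℝ) ^ l)
      = ((k : ℝ) + l) ^ (k + l) := by
  have hn : ((k : ℝ) + l) ≠ 0 := by
    have : (0 : ℝ) < ((k + l : ℕ) : ℝ) := by exact_mod_cast h
    push_cast at this; exact this.ne'
  have e := aux_pow_self (k + l)
  push_cast at e
  rw [e, aux_pow_self, aux_pow_self, Real.rpow_def_of_pos two_pos, ← Real.exp_add, ← Real.exp_add]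
  congr 1
  have h1 : 1 - (k : ℝ) / ((k : ℝ) + l) = l / ((k : ℝ) + l) := by field_simp; ring
  have hl : Real.log 2 ≠ 0 := (Real.log_pos one_lt_two).ne'
  have a1 := aux_mul_log_div k ((k : ℝ) + l) hn
  have a2 := aux_mul_log_div l ((k : ℝ) + l) hn
  unfold binEntropy
  rw [h1]
  unfold Real.logb
  have : Real.log 2 * (((k : ℝ) + l) * (-((k : ℝ) / ((k : ℝ) + l) * (Real.log ((k : ℝ) / ((k : ℝ) + l)) / Real.log 2)) -
      (l : ℝ) / ((k : ℝ) + l) * (Real.log ((l : ℝ) / ((k : ℝ) + l)) / Real.log 2)))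
      = -(k * Real.log ((k : ℝ) / ((k : ℝ) + l))) - l * Real.log ((l : ℝ) / ((k : ℝ) + l)) := by
    generalize Real.log ((k : ℝ) / ((k : ℝ) + l)) = x
    generalize Real.log ((l : ℝ) / ((k : ℝ) + l)) = y
    field_simp
  rw [this, a1, a2]
  ring

theorem aux_pow_self_pos (n : ℕ) : (0 : ℝ) < (n : ℝ) ^ n := by
  rw [aux_pow_self]; exact Real.exp_pos _

theorem aux_choose_le (k l : ℕ) (h : 1 ≤ k + l) :
    ((k + l).choose k : ℝ) ≤ (2 : ℝ) ^ (((k : ℝ) + l) * binEntropy ((k : ℝ) / ((k : ℝ) + l))) := by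
  have hp : (0 : ℝ) < (k : ℝ) ^ k * (l : ℝ) ^ l :=
    mul_pos (aux_pow_self_pos k) (aux_pow_self_pos l)
  refine le_of_mul_le_mul_right ?_ hp
  rw [aux_ent k l h, add_pow]
  have := Finset.single_le_sum (s := Finset.range (k + l + 1))
    (f := fun m => (k : ℝ) ^ m * (l : ℝ) ^ (k + l - m) * ((k + l).choose m : ℝ))
    (fun i _ => by positivity) (a := k) (by simp)
  simp only [Nat.add_sub_cancel_left] at this
  linarith

theorem aux_fact_le (n : ℕ) (hn : 1 ≤ n) :
    (n.factorial : ℝ) ≤ Real.exp 1 * Real.sqrt n * (n / Real.exp 1) ^ n := by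
  obtain ⟨m, rfl⟩ : ∃ m, n = m + 1 := ⟨n - 1, by omega⟩
  have h := Stirling.stirlingSeq'_antitone (Nat.zero_le m)
  simp only [Function.comp, Nat.succ_eq_add_one, zero_add, Stirling.stirlingSeq_one] at h
  unfold Stirling.stirlingSeq at h
  have hpos : (0 : ℝ) < ((m + 1 : ℕ) : ℝ) := by positivity
  rw [div_le_iff₀ (by positivity), Real.sqrt_mul (by norm_num)] at h
  refine h.trans (le_of_eq ?_)
  have : Real.sqrt 2 ≠ 0 := by positivity
  field_simp

theorem aux_choose_ge (k l : ℕ) (hk : 1 ≤ k) (hl : 1 ≤ l) :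
    (2 : ℝ) ^ (((k : ℝ) + l) * binEntropy ((k : ℝ) / ((k : ℝ) + l))) * Real.sqrt ((k : ℝ) + l)
      ≤ Real.exp 1 ^ 2 * ((k + l).choose k : ℝ) * Real.sqrt ((k : ℝ) * l) := by
  have hp : (0 : ℝ) < (k : ℝ) ^ k * (l : ℝ) ^ l :=
    mul_pos (aux_pow_self_pos k) (aux_pow_self_pos l)
  refine le_of_mul_le_mul_right ?_ hp
  have e := aux_ent k l (by omega)
  have f1 := aux_fact_le k hk
  have f2 := aux_fact_le l hl
  have f3 := Stirling.le_factorial_stirling (k + l)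
  have f4 : ((k + l).choose k : ℝ) * k.factorial * l.factorial = (k + l).factorial := by
    rw [Nat.choose_symm_add]
    exact_mod_cast Nat.add_choose_mul_factorial_mul_factorial k l
  have hs : Real.sqrt ((k : ℝ) + l) ≤ Real.sqrt (2 * Real.pi * ((k + l : ℕ) : ℝ)) := by
    apply Real.sqrt_le_sqrt
    push_cast
    have : (0 : ℝ) ≤ (k : ℝ) + l := by positivity
    nlinarith [Real.pi_gt_three]
  have g1 : Real.sqrt ((k : ℝ) + l) * (((k + l : ℕ) : ℝ) / Real.exp 1) ^ (k + l) ≤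
      ((k + l).choose k : ℝ) * (Real.exp 1 * Real.sqrt k * (k / Real.exp 1) ^ k) *
        (Real.exp 1 * Real.sqrt l * (l / Real.exp 1) ^ l) := by
    calc _ ≤ Real.sqrt (2 * Real.pi * ((k + l : ℕ) : ℝ)) * (((k + l : ℕ) : ℝ) / Real.exp 1) ^ (k + l) := by
          gcongr
      _ ≤ ((k + l).factorial : ℝ) := f3
      _ = ((k + l).choose k : ℝ) * k.factorial * l.factorial := f4.symm
      _ ≤ _ := by gcongr
  have hE : (0 : ℝ) < Real.exp 1 ^ (k + l) := by positivity
  have g2 := mul_le_mul_of_nonneg_right g1 hE.le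
  have lhs : Real.sqrt ((k : ℝ) + l) * (((k + l : ℕ) : ℝ) / Real.exp 1) ^ (k + l) * Real.exp 1 ^ (k + l)
      = Real.sqrt ((k : ℝ) + l) * ((k : ℝ) + l) ^ (k + l) := by
    push_cast
    rw [mul_assoc, ← mul_pow, div_mul_cancel₀ _ (Real.exp_pos 1).ne']
  have rhs : ((k + l).choose k : ℝ) * (Real.exp 1 * Real.sqrt k * (k / Real.exp 1) ^ k) *
        (Real.exp 1 * Real.sqrt l * (l / Real.exp 1) ^ l) * Real.exp 1 ^ (k + l)
      = Real.exp 1 ^ 2 * ((k + l).choose k : ℝ) * Real.sqrt ((k : ℝ) * l) *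
        ((k : ℝ) ^ k * (l : ℝ) ^ l) := by
    rw [Real.sqrt_mul (by positivity), div_pow, div_pow, pow_add]
    have : Real.exp 1 ≠ 0 := (Real.exp_pos 1).ne'
    field_simp
  rw [lhs, rhs] at g2
  calc _ = Real.sqrt ((k : ℝ) + l) * ((k : ℝ) + l) ^ (k + l) := by rw [← e]; ring
    _ ≤ _ := g2

/-- Upper bound on the hypergeometric weight `binom(r,k)·binom(p−r,N−k)` in terms of
`binom(p,N)` and the entropy quantity `γ`. -/
theorem stmt_16 :
    ∃ Γ : ℝ, 0 < Γ ∧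
      ∀ p r N k : ℕ, 1 ≤ r → 1 ≤ N → r + N < p → k ≤ min N r →
        (r.choose k : ℝ) * ((p - r).choose (N - k) : ℝ) ≤
          Γ * (p.choose N : ℝ) *
            Real.sqrt ((N : ℝ) * ((p : ℝ) - N) / ((p : ℝ) - N - r)) *
            (2 : ℝ) ^ (-(r : ℝ) *
              (((p : ℝ) / r) * binEntropy ((N : ℝ) / p) - binEntropy ((k : ℝ) / r) -
                ((p : ℝ) / r - 1) * binEntropy (((N : ℝ) - k) / ((p : ℝ) - r)))) := by
  refine ⟨Real.exp 1 ^ 2, by positivity, ?_⟩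
  intro p r N k hr hN hp hk
  have hkN : k ≤ N := hk.trans (min_le_left _ _)
  have hkr : k ≤ r := hk.trans (min_le_right _ _)
  have b1 := aux_choose_le k (r - k) (by omega)
  have b2 := aux_choose_le (N - k) (p - r - (N - k)) (by omega)
  have b3 := aux_choose_ge N (p - N) hN (by omega)
  have hr0 : (r : ℝ) ≠ 0 := by positivity
  have c1 : (k : ℝ) + ((r - k : ℕ) : ℝ) = r := by push_cast [hkr]; ring
  have c2 : ((N - k : ℕ) : ℝ) + ((p - r - (N - k) : ℕ) : ℝ) = (p : ℝ) - r := by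
    rw [← Nat.cast_add, ← Nat.cast_sub (by omega : r ≤ p)]; congr 1; omega
  have c3 : (N : ℝ) + ((p - N : ℕ) : ℝ) = p := by
    rw [← Nat.cast_add]; congr 1; omega
  have c4 : ((N - k : ℕ) : ℝ) = (N : ℝ) - k := by push_cast [hkN]; ring
  have c5 : ((p - N : ℕ) : ℝ) = (p : ℝ) - N := Nat.cast_sub (by omega)
  rw [c1, show k + (r - k) = r by omega] at b1
  rw [c2, c4, show N - k + (p - r - (N - k)) = p - r by omega] at b2
  rw [c3, c5, show N + (p - N) = p by omega] at b3
  have ex : -(r : ℝ) *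
              (((p : ℝ) / r) * binEntropy ((N : ℝ) / p) - binEntropy ((k : ℝ) / r) -
                ((p : ℝ) / r - 1) * binEntropy (((N : ℝ) - k) / ((p : ℝ) - r)))
      = (r : ℝ) * binEntropy ((k : ℝ) / r)
        + ((p : ℝ) - r) * binEntropy (((N : ℝ) - k) / ((p : ℝ) - r))
        - (p : ℝ) * binEntropy ((N : ℝ) / p) := by
    generalize binEntropy ((k : ℝ) / r) = x
    generalize binEntropy (((N : ℝ) - k) / ((p : ℝ) - r)) = y
    generalize binEntropy ((N : ℝ) / p) = z
    field_simp
    ring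
  rw [ex, Real.rpow_sub two_pos, Real.rpow_add two_pos]
  have pA := Real.rpow_pos_of_pos (two_pos : (0:ℝ) < 2) ((p : ℝ) * binEntropy ((N : ℝ) / p))
  have pB := Real.rpow_pos_of_pos (two_pos : (0:ℝ) < 2) ((r : ℝ) * binEntropy ((k : ℝ) / r))
  have pC := Real.rpow_pos_of_pos (two_pos : (0:ℝ) < 2)
    (((p : ℝ) - r) * binEntropy (((N : ℝ) - k) / ((p : ℝ) - r)))
  generalize (2 : ℝ) ^ ((p : ℝ) * binEntropy ((N : ℝ) / p)) = A at *
  generalize (2 : ℝ) ^ ((r : ℝ) * binEntropy ((k : ℝ) / r)) = B at *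
  generalize (2 : ℝ) ^ (((p : ℝ) - r) * binEntropy (((N : ℝ) - k) / ((p : ℝ) - r))) = C at *
  have hp' : (r : ℝ) + N < p := by exact_mod_cast hp
  have hN0 : (0 : ℝ) ≤ N := by positivity
  have hr1 : (0 : ℝ) ≤ r := by positivity
  have hpp : (0 : ℝ) < p := by linarith
  have hs : Real.sqrt ((N : ℝ) * ((p : ℝ) - N)) ≤
      Real.sqrt ((N : ℝ) * ((p : ℝ) - N) / ((p : ℝ) - N - r)) * Real.sqrt p := by
    rw [← Real.sqrt_mul' _ hpp.le]
    apply Real.sqrt_le_sqrt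
    have hd : (0 : ℝ) < (p : ℝ) - N - r := by linarith
    have hx : (0 : ℝ) ≤ (N : ℝ) * ((p : ℝ) - N) := mul_nonneg hN0 (by linarith)
    rw [div_mul_eq_mul_div, le_div_iff₀ hd]
    exact mul_le_mul_of_nonneg_left (by linarith) hx
  have hA : A ≤ Real.exp 1 ^ 2 * (p.choose N : ℝ) *
      Real.sqrt ((N : ℝ) * ((p : ℝ) - N) / ((p : ℝ) - N - r)) := by
    refine le_of_mul_le_mul_right ?_ (Real.sqrt_pos.2 hpp)
    refine b3.trans ?_
    rw [mul_assoc _ _ (Real.sqrt (p : ℝ))]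
    exact mul_le_mul_of_nonneg_left hs (by positivity)
  calc (r.choose k : ℝ) * ((p - r).choose (N - k) : ℝ) ≤ B * C := by gcongr
    _ = A * (B * C / A) := by field_simp
    _ ≤ _ := mul_le_mul_of_nonneg_right hA (by positivity)
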